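/- A diagonal measure σ on X^d is a graph joining arising from powers of T if and only if there exists n₁ ≥ n₀(σ) such that for all n ≥ n₁ the transition from D_n(σ) to D_{n+1}(σ) is the central case, i.e. D_{n+1}(σ) = D_n(σ)(1,…,1). -/

import Mathlib

open MeasureTheory Set
open scoped ENNReal NNReal Classical

noncomputable section

/-- Heights of the towers of the infinite Chacon transformation
(tower `0` is `[0,1)` with a single level, so `chaconH 1 = 8`). -/
def chaconH : ℕ → ℕ
  | 0 => 1
  | n + 1 => 2 * (3 * chaconH n + 1)

/-- Left endpoint of level `k` of tower `n`.  At step `n+1`, tower `n` (which fills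
`[0, hₙ·3⁻ⁿ)`) is cut into three subcolumns of equal width; one spacer is added above the
middle subcolumn and `3hₙ+1` spacers above the third one, the spacers being taken
successively as the leftmost intervals of length `3⁻⁽ⁿ⁺¹⁾` in the unused part of `ℝ₊`;
then the three subcolumns are stacked left under right. -/
def chaconL : ℕ → ℕ → ℝ
  | 0, _ => 0
  | n + 1, k =>
      if k < chaconH n then chaconL n k
      else if k < 2 * chaconH n then chaconL n (k - chaconH n) + (3 : ℝ)⁻¹ ^ (n + 1)
      else if k = 2 * chaconH n then (chaconH n : ℝ) * (3 : ℝ)⁻¹ ^ n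
      else if k ≤ 3 * chaconH n then
        chaconL n (k - 2 * chaconH n - 1) + 2 * (3 : ℝ)⁻¹ ^ (n + 1)
      else (chaconH n : ℝ) * (3 : ℝ)⁻¹ ^ n
        + ((k : ℝ) - 3 * (chaconH n : ℝ)) * (3 : ℝ)⁻¹ ^ (n + 1)

/-- Level `k` of tower `n`: an interval of length `3⁻ⁿ`, closed to the left and open to
the right. -/
def chaconLevel (n k : ℕ) : Set ℝ := Ico (chaconL n k) (chaconL n k + (3 : ℝ)⁻¹ ^ n)

/-- The Chacon transformation on `ℝ`: each point of a non-top level of some tower is sent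
to the point directly above it (the value does not depend on the choice of the tower). -/
def chaconT0 (x : ℝ) : ℝ :=
  if h : ∃ p : ℕ × ℕ, p.2 + 1 < chaconH p.1 ∧ x ∈ chaconLevel p.1 p.2 then
    x - chaconL h.choose.1 h.choose.2 + chaconL h.choose.1 (h.choose.2 + 1)
  else x

/-- The inverse of the Chacon transformation on `ℝ`. -/
def chaconT0inv (x : ℝ) : ℝ :=
  if h : ∃ p : ℕ × ℕ, p.2 + 1 < chaconH p.1 ∧ x ∈ chaconLevel p.1 (p.2 + 1) then
    x - chaconL h.choose.1 (h.choose.2 + 1) + chaconL h.choose.1 h.choose.2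
  else x

/-- The space `X = ℝ₊`. -/
abbrev ChaconX : Type := ↥(Set.Ici (0 : ℝ))

/-- The infinite Chacon transformation `T` on `X = ℝ₊`. -/
def chaconT (x : ChaconX) : ChaconX :=
  ⟨max 0 (chaconT0 (x : ℝ)), Set.mem_Ici.mpr (le_max_left 0 _)⟩

/-- The inverse `T⁻¹` of the Chacon transformation on `X = ℝ₊`. -/
def chaconTinv (x : ChaconX) : ChaconX :=
  ⟨max 0 (chaconT0inv (x : ℝ)), Set.mem_Ici.mpr (le_max_left 0 _)⟩

/-- Integer powers `T^j` of the Chacon transformation. -/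
def chaconTZ (j : ℤ) : ChaconX → ChaconX :=
  if 0 ≤ j then chaconT^[j.toNat] else chaconTinv^[(-j).toNat]

/-- Lebesgue measure `μ` on `X = ℝ₊`. -/
def chaconMu : Measure ChaconX := volume.comap Subtype.val

/-- `C n`: the bottom half of tower `n` (its lowest `hₙ/2` levels), as a subset of `X`. -/
def chaconC (n : ℕ) : Set ChaconX :=
  {x | ∃ k, k < chaconH n / 2 ∧ (x : ℝ) ∈ chaconLevel n k}

/-- `tₙ x ∈ {1,2,3}`: the subcolumn of tower `n` containing `x`
(junk value `0` if `x` is not in tower `n`). -/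
def chaconTn (n : ℕ) (x : ChaconX) : ℕ :=
  if h : ∃ k, k < chaconH n ∧ (x : ℝ) ∈ chaconLevel n k then
    1 + (⌊((x : ℝ) - chaconL n h.choose) * (3 : ℝ) ^ (n + 1)⌋).toNat
  else 0

/-- The Cartesian power `T^{×ι}` of the Chacon transformation, acting coordinatewise. -/
def chaconTd (ι : Type) (x : ι → ChaconX) : ι → ChaconX := fun i => chaconT (x i)

/-- Integer powers `(T^{×ι})^j`, acting coordinatewise. -/
def chaconTdZ (ι : Type) (j : ℤ) (x : ι → ChaconX) : ι → ChaconX := fun i => chaconTZ j (x i)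

/-- `Cₙ^ι ⊆ X^ι`. -/
def chaconCd (ι : Type) (n : ℕ) : Set (ι → ChaconX) := {x | ∀ i, x i ∈ chaconC n}

/-- An `n`-box: a Cartesian product of levels of `C n`. -/
def IsNBox (ι : Type) (n : ℕ) (B : Set (ι → ChaconX)) : Prop :=
  ∃ k : ι → ℕ, (∀ i, k i < chaconH n / 2) ∧
    B = {x : ι → ChaconX | ∀ i, ((x i : ℝ)) ∈ chaconLevel n (k i)}

/-- An `n`-diagonal: a maximal finite family of `n`-boxes `B, T^{×d}B, …, (T^{×d})^ℓ B`,
regarded as the union of its boxes. -/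
def IsNDiagonal (ι : Type) (n : ℕ) (D : Set (ι → ChaconX)) : Prop :=
  ∃ (B : Set (ι → ChaconX)) (ℓ : ℕ),
    (∀ j : ℕ, j ≤ ℓ → IsNBox ι n (chaconTdZ ι (j : ℤ) '' B)) ∧
    ¬ chaconTdZ ι (-1) '' B ⊆ chaconCd ι n ∧
    ¬ chaconTdZ ι ((ℓ : ℤ) + 1) '' B ⊆ chaconCd ι n ∧
    D = ⋃ j ∈ Finset.range (ℓ + 1), chaconTdZ ι (j : ℤ) '' B

/-- A measure is boundedly finite if bounded (measurable) sets have finite measure. -/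
def BoundedlyFinite {α : Type*} [MeasurableSpace α] [PseudoMetricSpace α]
    (σ : Measure α) : Prop :=
  ∀ A : Set α, MeasurableSet A → Bornology.IsBounded A → σ A < ⊤

/-- Diagonal measures on `X^ι`: boundedly finite, `T^{×ι}`-invariant measures which are,
for every large enough `n`, concentrated on a single `n`-diagonal inside `Cₙ^ι`. -/
def IsDiagonalMeasure (ι : Type) [Fintype ι] (σ : Measure (ι → ChaconX)) : Prop :=
  BoundedlyFinite σ ∧ σ.map (chaconTd ι) = σ ∧
    ∃ n₀ : ℕ, 1 ≤ n₀ ∧ ∀ n, n₀ ≤ n →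
      ∃ D : Set (ι → ChaconX), IsNDiagonal ι n D ∧ σ (chaconCd ι n \ D) = 0

/-- A wandering set for the `ℤ`-action `Uz`. -/
def ZWandering {α : Type*} (Uz : ℤ → α → α) (W : Set α) : Prop :=
  ∀ j k : ℤ, j ≠ k → Disjoint (Uz j '' W) (Uz k '' W)

/-- Conservativity: every measurable wandering set is null. -/
def ZConservative {α : Type*} [MeasurableSpace α] (σ : Measure α) (Uz : ℤ → α → α) : Prop :=
  ∀ W : Set α, MeasurableSet W → ZWandering Uz W → σ W = 0

/-- Total dissipativity: mod `σ`, the space is the disjoint union of the iterates of a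
wandering set. -/
def ZTotallyDissipative {α : Type*} [MeasurableSpace α] (σ : Measure α)
    (Uz : ℤ → α → α) : Prop :=
  ∃ W : Set α, MeasurableSet W ∧ ZWandering Uz W ∧ σ ((⋃ j : ℤ, Uz j '' W)ᶜ) = 0

/-- Ergodicity of a (not necessarily finite) invariant measure: every invariant
measurable set is null or conull. -/
def MeasErgodic {α : Type*} [MeasurableSpace α] (σ : Measure α) (U : α → α) : Prop :=
  ∀ A : Set α, MeasurableSet A → U ⁻¹' A = A → σ A = 0 ∨ σ Aᶜ = 0

/-- `Icc a b` is an `n`-crossing for `x`: a maximal finite set of consecutive integers `j`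
with `(T^{×ι})^j x ∈ Cₙ^ι`. -/
def IsCrossing (ι : Type) (n : ℕ) (x : ι → ChaconX) (a b : ℤ) : Prop :=
  a ≤ b ∧ (∀ j : ℤ, a ≤ j → j ≤ b → chaconTdZ ι j x ∈ chaconCd ι n) ∧
    chaconTdZ ι (a - 1) x ∉ chaconCd ι n ∧ chaconTdZ ι (b + 1) x ∉ chaconCd ι n

/-- `n(x)`: the smallest `n ≥ 1` with `x ∈ Cₙ^ι`. -/
def chaconNOf (ι : Type) (x : ι → ChaconX) : ℕ :=
  if h : ∃ n : ℕ, 1 ≤ n ∧ x ∈ chaconCd ι n then Nat.find h else 0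

/-- `B(τ)`: the points of `B` whose coordinate `i` lies in subcolumn `τ i` of tower `n`. -/
def chaconBoxTau (ι : Type) (n : ℕ) (B : Set (ι → ChaconX)) (τ : ι → ℕ) :
    Set (ι → ChaconX) :=
  {x ∈ B | ∀ i, chaconTn n (x i) = τ i}

/-- The transition from the `n`-diagonal `D` to the `(n+1)`-diagonal `D'` is the central
one, i.e. `D' = D(1,…,1)`. -/
def CentralTransition (ι : Type) (n : ℕ) (D D' : Set (ι → ChaconX)) : Prop :=
  ∀ B : Set (ι → ChaconX), IsNBox ι n B → B ⊆ D →
    chaconBoxTau ι n B (fun _ => 1) ⊆ D'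

/-- The `n`-diagonal containing a given set (junk value `∅` if there is none). -/
def diagOfBox (ι : Type) (n : ℕ) (B : Set (ι → ChaconX)) : Set (ι → ChaconX) :=
  if h : ∃ D, IsNDiagonal ι n D ∧ B ⊆ D then h.choose else ∅

/-- `D(τ)`: the `(n+1)`-diagonal containing `B(τ)` for an `n`-box `B ⊆ D`. -/
def diagTau (ι : Type) (n : ℕ) (D : Set (ι → ChaconX)) (τ : ι → ℕ) : Set (ι → ChaconX) :=
  if h : ∃ B, IsNBox ι n B ∧ B ⊆ D then diagOfBox ι (n + 1) (chaconBoxTau ι n h.choose τ)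
  else ∅

/-- A consistent family of diagonals `(Dₙ)_{n ≥ n₀}`. -/
def IsConsistentFamily (ι : Type) (n₀ : ℕ) (D : ℕ → Set (ι → ChaconX)) : Prop :=
  (∀ n, n₀ ≤ n → IsNDiagonal ι n (D n)) ∧
    (chaconCd ι (n₀ - 1) ∩ ⋂ n, ⋂ (_ : n₀ ≤ n), D n).Nonempty ∧
    ∀ n, n₀ ≤ n → D (n + 1) ∩ chaconCd ι n ⊆ D n

/-- `x` is seen by the family of diagonals `(Dₙ)_{n ≥ n₀}`. -/
def SeenByFam (ι : Type) (n₀ : ℕ) (D : ℕ → Set (ι → ChaconX)) (x : ι → ChaconX) : Prop :=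
  ∀ n, n₀ ≤ n → x ∉ chaconCd ι n ∨ x ∈ D n

/-- Graph joinings arising from powers of `T`:
`σ(A₁ × ⋯ × A_d) = α μ(T^{-k₁}A₁ ∩ ⋯ ∩ T^{-k_d}A_d)` for some `0 < α < ∞`. -/
def IsGraphJoining (ι : Type) [Fintype ι] (σ : Measure (ι → ChaconX)) : Prop :=
  ∃ (α : ℝ≥0∞) (k : ι → ℤ), 0 < α ∧ α ≠ ⊤ ∧
    ∀ A : ι → Set ChaconX, (∀ i, MeasurableSet (A i)) →
      σ (Set.univ.pi A) = α * chaconMu (⋂ i, chaconTZ (k i) ⁻¹' A i)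

/-- Ergodic components of `σ`: the nonzero boundedly finite `T^{×ι}`-invariant ergodic
measures, absolutely continuous with respect to `σ`, which appear in its ergodic
decomposition. -/
def IsErgodicComponent (ι : Type) [Fintype ι] (σ ρ : Measure (ι → ChaconX)) : Prop :=
  ρ ≠ 0 ∧ BoundedlyFinite ρ ∧ ρ.map (chaconTd ι) = ρ ∧ MeasErgodic ρ (chaconTd ι) ∧ ρ ≪ σ

end

/-!
An `n`-diagonal is determined by its lowest box, that is, by levels `κₙ i` of which at least one is
the bottom level. Subcolumn `1` of level `k` of tower `n` is level `k` of tower `n + 1`, so the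
transition `Dₙ → D_{n+1}` is central exactly when `κ_{n+1} = κₙ`.

If `κₙ = κ` for all large `n`, choose `i₀` with `κ i₀ = 0`. For every large `n` the coordinate `z i`
of almost every `z` lies in the same level of tower `n` as `T^{κ i} (z i₀)`. Hence
`z i = T^{κ i} (z i₀)` and `σ` is carried by a graph. Its marginal on the coordinate `i₀` is
invariant under `T` and finite on levels. It is therefore a multiple of `μ`, because an invariant
measure gives the same mass to all levels of a tower.

Conversely, a graph joining charges the `n`-box with some fixed indices `m` for every large `n`.
This box then lies in `Dₙ`, so `m i - κₙ i` does not depend on `i`, and this determines `κₙ`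
independently of `n`.
-/

namespace Chacon

open Filter Function Topology

variable {n m k j : ℕ} {x y : ChaconX}

/-! ### Towers and their levels -/

lemma chaconH_pos (n : ℕ) : 0 < chaconH n := by
  cases n <;> simp [chaconH]

lemma six_pow_le_chaconH (n : ℕ) : 6 ^ n ≤ chaconH n := by
  induction n with
  | zero => simp [chaconH]
  | succ n ih => rw [chaconH, pow_succ]; lia

lemma eventually_lt_half_chaconH (a : ℕ) : ∀ᶠ n in atTop, a < chaconH n / 2 := by
  filter_upwards [eventually_gt_atTop a] with n hn
  obtain ⟨n, rfl⟩ := Nat.exists_eq_add_one.2 (Nat.zero_lt_of_lt hn)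
  have hpow : n < 6 ^ n := Nat.lt_pow_self (by norm_num)
  have hH := six_pow_le_chaconH n
  rw [chaconH]
  lia

lemma lt_chaconH_of_lt_half (hk : k < chaconH n / 2) : k < chaconH n :=
  hk.trans_le (Nat.div_le_self _ _)

/-- Position, counted from the left, of level `k` of tower `n` among the `chaconH n` intervals
of length `3⁻ⁿ` that make up `[0, hₙ·3⁻ⁿ)`. It turns the real endpoints `chaconL` into integers. -/
def levelRank : ℕ → ℕ → ℕ
  | 0, _ => 0
  | n + 1, k =>
      if k < chaconH n then 3 * levelRank n k
      else if k < 2 * chaconH n then 3 * levelRank n (k - chaconH n) + 1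
      else if k = 2 * chaconH n then 3 * chaconH n
      else if k ≤ 3 * chaconH n then 3 * levelRank n (k - 2 * chaconH n - 1) + 2
      else k

lemma chaconL_eq_levelRank_mul (n k : ℕ) : chaconL n k = levelRank n k * (3 : ℝ)⁻¹ ^ n := by
  induction n generalizing k with
  | zero => simp [chaconL, levelRank]
  | succ n ih =>
    simp only [chaconL, levelRank]
    split_ifs <;> (try simp only [ih]) <;> push_cast <;> rw [pow_succ] <;> ring

/-- Height at which the copy of tower `n` given by its subcolumn `c` (numbered from `0`) starts
in tower `n + 1`. -/
def copyOffset (n : ℕ) : Fin 3 → ℕ := ![0, chaconH n, 2 * chaconH n + 1]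

lemma add_copyOffset_lt_half (hk : k < chaconH n) (c : Fin 3) :
    k + copyOffset n c < chaconH (n + 1) / 2 := by
  fin_cases c <;> simp [copyOffset, chaconH] <;> lia

lemma add_copyOffset_lt (hk : k < chaconH n) (c : Fin 3) :
    k + copyOffset n c < chaconH (n + 1) :=
  lt_chaconH_of_lt_half (add_copyOffset_lt_half hk c)

lemma lt_half_chaconH_succ (hk : k < chaconH n / 2) : k < chaconH (n + 1) / 2 :=
  add_copyOffset_lt_half (lt_chaconH_of_lt_half hk) 0

lemma levelRank_add_copyOffset (hk : k < chaconH n) (c : Fin 3) :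
    levelRank (n + 1) (k + copyOffset n c) = 3 * levelRank n k + c := by
  fin_cases c <;> simp [copyOffset, levelRank] <;> grind

lemma chaconL_add_copyOffset (hk : k < chaconH n) (c : Fin 3) :
    chaconL (n + 1) (k + copyOffset n c) = chaconL n k + c * (3 : ℝ)⁻¹ ^ (n + 1) := by
  simp only [chaconL_eq_levelRank_mul, levelRank_add_copyOffset hk]
  push_cast
  ring

lemma levelRank_lt (hk : k < chaconH n) : levelRank n k < chaconH n := by
  induction n generalizing k with
  | zero => simp [levelRank, chaconH]
  | succ n ih =>
    simp only [levelRank]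
    simp only [chaconH] at hk ⊢
    grind

lemma levelRank_surjOn (n : ℕ) : SurjOn (levelRank n) (Iio (chaconH n)) (Iio (chaconH n)) := by
  induction n with
  | zero => intro q hq; exact ⟨0, by simpa [chaconH, levelRank, eq_comm] using hq⟩
  | succ n ih =>
    intro q hq
    rcases lt_trichotomy q (3 * chaconH n) with h | rfl | h
    · obtain ⟨k, hk, hkq⟩ := ih (show q / 3 < chaconH n by lia)
      refine ⟨k + copyOffset n (Fin.ofNat 3 q), add_copyOffset_lt hk _, ?_⟩
      rw [levelRank_add_copyOffset hk, hkq, Fin.val_ofNat]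
      lia
    · exact ⟨2 * chaconH n, by simp [chaconH]; lia, by simp [levelRank, chaconH_pos]⟩
    · exact ⟨q, hq, by simp only [levelRank]; grind⟩

lemma levelRank_injOn (n : ℕ) : InjOn (levelRank n) (Iio (chaconH n)) :=
  (((finite_Iio _).surjOn_iff_bijOn_of_mapsTo fun _ ↦ levelRank_lt).1 (levelRank_surjOn n)).injOn

/-- Level `k` of tower `n`, as a subset of `X`. -/
def level (n k : ℕ) : Set ChaconX := Subtype.val ⁻¹' chaconLevel n k

lemma mem_level_iff_floor : x ∈ level n k ↔ ⌊(x : ℝ) * 3 ^ n⌋₊ = levelRank n k := by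
  have h3 : (0 : ℝ) < 3 ^ n := by positivity
  rw [Nat.floor_eq_iff (mul_nonneg x.2 h3.le), level, mem_preimage, chaconLevel, mem_Ico,
    chaconL_eq_levelRank_mul, ← add_one_mul, inv_pow, ← div_eq_mul_inv, ← div_eq_mul_inv,
    div_le_iff₀ h3, lt_div_iff₀ h3]

lemma level_index_unique (hk : k < chaconH n) (hj : j < chaconH n) (hx : x ∈ level n k)
    (hx' : x ∈ level n j) : k = j :=
  levelRank_injOn n hk hj <| (mem_level_iff_floor.1 hx).symm.trans (mem_level_iff_floor.1 hx')

lemma floor_mul_three_pow_of_le (hnm : n ≤ m) (a : ℝ) :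
    ⌊a * 3 ^ n⌋₊ = ⌊a * 3 ^ m⌋₊ / 3 ^ (m - n) := by
  obtain ⟨d, rfl⟩ := Nat.exists_eq_add_of_le hnm
  rw [Nat.add_sub_cancel_left, ← Nat.floor_div_natCast]
  congr 1
  push_cast
  field_simp
  ring

lemma level_subset_level (hnm : n ≤ m) (hx : x ∈ level n k) (hx' : x ∈ level m j) :
    level m j ⊆ level n k := by
  intro y hy
  rw [mem_level_iff_floor] at hx hx' hy ⊢
  rw [← hx, floor_mul_three_pow_of_le hnm, floor_mul_three_pow_of_le hnm, hy, hx']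

lemma mem_level_iff_exists_copy (hk : k < chaconH n) :
    x ∈ level n k ↔ ∃ c, x ∈ level (n + 1) (k + copyOffset n c) := by
  simp only [mem_level_iff_floor, levelRank_add_copyOffset hk,
    floor_mul_three_pow_of_le (Nat.le_succ n), Nat.succ_eq_add_one, add_tsub_cancel_left, pow_one]
  constructor
  · intro h
    exact ⟨Fin.ofNat 3 ⌊(x : ℝ) * 3 ^ (n + 1)⌋₊, by rw [Fin.val_ofNat]; lia⟩
  · rintro ⟨c, h⟩
    lia

lemma chaconL_nonneg (n k : ℕ) : 0 ≤ chaconL n k := by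
  rw [chaconL_eq_levelRank_mul]; positivity

lemma level_nonempty (n k : ℕ) : (level n k).Nonempty :=
  ⟨⟨chaconL n k, chaconL_nonneg n k⟩, le_rfl, lt_add_of_pos_right _ (by positivity)⟩

lemma measurableSet_level (n k : ℕ) : MeasurableSet (level n k) :=
  measurable_subtype_coe measurableSet_Ico

lemma dist_lt_of_mem_level (hx : x ∈ level n k) (hy : y ∈ level n k) :
    dist x y < (3 : ℝ)⁻¹ ^ n := by
  rw [Subtype.dist_eq, Real.dist_eq, abs_lt]
  constructor <;> linarith [hx.1, hx.2, hy.1, hy.2]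

lemma isBounded_level (n k : ℕ) : Bornology.IsBounded (level n k) :=
  Metric.isBounded_iff.2 ⟨(3 : ℝ)⁻¹ ^ n, fun _ hx _ hy ↦ (dist_lt_of_mem_level hx hy).le⟩

lemma tendsto_inv_three_pow : Tendsto (fun n : ℕ ↦ (3 : ℝ)⁻¹ ^ n) atTop (𝓝 0) :=
  tendsto_pow_atTop_nhds_zero_of_lt_one (by norm_num) (by norm_num)

lemma eventually_exists_mem_level (x : ChaconX) :
    ∀ᶠ n in atTop, ∃ k < chaconH n / 2, x ∈ level n k := by
  obtain ⟨N, hN⟩ := pow_unbounded_of_one_lt (x : ℝ) (one_lt_two (α := ℝ))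
  filter_upwards [eventually_ge_atTop (N + 1)] with n hn
  obtain ⟨n, rfl⟩ := Nat.exists_eq_add_one.2 (Nat.zero_lt_of_lt hn)
  have hfloor : ⌊(x : ℝ) * 3 ^ n⌋₊ < chaconH n := by
    rw [Nat.floor_lt (mul_nonneg x.2 (by positivity))]
    calc (x : ℝ) * 3 ^ n < 2 ^ n * 3 ^ n := by
          gcongr
          exact hN.trans_le (pow_le_pow_right₀ one_le_two (by lia))
      _ = 6 ^ n := by rw [← mul_pow]; norm_num
      _ ≤ chaconH n := mod_cast six_pow_le_chaconH n
  obtain ⟨k, hk, hkx⟩ := levelRank_surjOn n hfloor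
  obtain ⟨c, hc⟩ := (mem_level_iff_exists_copy hk).1 (mem_level_iff_floor.2 hkx.symm)
  exact ⟨_, add_copyOffset_lt_half hk c, hc⟩

lemma eventually_level_subset {U : Set ChaconX} (hU : U ∈ 𝓝 x) :
    ∀ᶠ n in atTop, ∀ k, x ∈ level n k → level n k ⊆ U := by
  obtain ⟨ε, hε, hball⟩ := Metric.mem_nhds_iff.1 hU
  filter_upwards [tendsto_inv_three_pow.eventually_lt_const hε] with n hn k hx y hy
  exact hball ((dist_lt_of_mem_level hy hx).trans hn)

lemma eq_of_eventually_mem_same_level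
    (h : ∀ᶠ n in atTop, ∃ k, x ∈ level n k ∧ y ∈ level n k) : x = y :=
  dist_le_zero.1 <| ge_of_tendsto tendsto_inv_three_pow <|
    h.mono fun _ ⟨_, hx, hy⟩ ↦ (dist_lt_of_mem_level hx hy).le

lemma chaconMu_level (n k : ℕ) : chaconMu (level n k) = (3 : ℝ≥0∞)⁻¹ ^ n := by
  have hval : Subtype.val '' level n k = chaconLevel n k := by
    rw [level, Subtype.image_preimage_coe, inter_eq_right]
    exact fun a ha ↦ (chaconL_nonneg n k).trans ha.1
  rw [chaconMu, comap_subtype_coe_apply measurableSet_Ici, hval, chaconLevel, Real.volume_Ico,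
    add_sub_cancel_left, ENNReal.ofReal_pow (by positivity), ENNReal.ofReal_inv_of_pos (by simp),
    ENNReal.ofReal_ofNat]

lemma chaconTn_eq (hk : k < chaconH n) {c : Fin 3} (hx : x ∈ level (n + 1) (k + copyOffset n c)) :
    chaconTn n x = c + 1 := by
  have hxk := (mem_level_iff_exists_copy hk).2 ⟨c, hx⟩
  have h : ∃ k < chaconH n, (x : ℝ) ∈ chaconLevel n k := ⟨k, hk, hxk⟩
  have hchoose : h.choose = k := level_index_unique h.choose_spec.1 hk h.choose_spec.2 hxk
  have hfloor : ⌊((x : ℝ) - chaconL n k) * 3 ^ (n + 1)⌋ = c := by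
    obtain ⟨hl, hu⟩ : (x : ℝ) ∈ chaconLevel (n + 1) (k + copyOffset n c) := hx
    rw [chaconL_add_copyOffset hk] at hl hu
    rw [Int.floor_eq_iff, ← div_le_iff₀ (by positivity), ← lt_div_iff₀ (by positivity),
      div_eq_mul_inv, div_eq_mul_inv, ← inv_pow, Int.cast_natCast]
    constructor <;> linarith
  rw [chaconTn, dif_pos h, hchoose, hfloor, Int.toNat_natCast, add_comm]

/-! ### The transformation on levels -/

lemma exists_tower_copy (hnm : n ≤ m) (hk : k < chaconH n) (hx : x ∈ level n k) :
    ∃ (o : ℕ) (δ : ℝ), x ∈ level m (k + o) ∧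
      ∀ i < chaconH n, i + o < chaconH m ∧ chaconL m (i + o) = chaconL n i + δ := by
  induction m, hnm using Nat.le_induction with
  | base => exact ⟨0, 0, hx, by simp⟩
  | succ m _ ih =>
    obtain ⟨o, δ, hxo, hcopy⟩ := ih
    obtain ⟨c, hc⟩ := (mem_level_iff_exists_copy (hcopy k hk).1).1 hxo
    refine ⟨o + copyOffset m c, δ + c * (3 : ℝ)⁻¹ ^ (m + 1), by rwa [← add_assoc], fun i hi ↦ ?_⟩
    obtain ⟨hio, hL⟩ := hcopy i hi
    rw [← add_assoc, chaconL_add_copyOffset hio, hL, add_assoc (chaconL n i)]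
    exact ⟨add_copyOffset_lt hio c, rfl⟩

lemma chaconL_sub_chaconL_eq {k' j' : ℕ} (hk : k < chaconH n) (hk' : k' < chaconH n)
    (hj : j < chaconH m) (hj' : j' < chaconH m) (hx : x ∈ level n k) (hx' : x ∈ level m j)
    (h : k' + j = j' + k) : chaconL n k' - chaconL n k = chaconL m j' - chaconL m j := by
  wlog hnm : n ≤ m generalizing n m k k' j j'
  · exact (this hj hj' hk hk' hx' hx h.symm (le_of_not_ge hnm)).symm
  obtain ⟨o, δ, hxo, hcopy⟩ := exists_tower_copy hnm hk hx
  obtain ⟨hko, hLk⟩ := hcopy k hk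
  obtain ⟨-, hLk'⟩ := hcopy k' hk'
  obtain rfl := level_index_unique hj hko hx' hxo
  obtain rfl : j' = k' + o := by lia
  rw [hLk, hLk', add_sub_add_right_eq_sub]

lemma coe_chaconT (hk : k + 1 < chaconH n) (hx : x ∈ level n k) :
    (chaconT x : ℝ) = x + (chaconL n (k + 1) - chaconL n k) := by
  have h : ∃ p : ℕ × ℕ, p.2 + 1 < chaconH p.1 ∧ (x : ℝ) ∈ chaconLevel p.1 p.2 := ⟨(n, k), hk, hx⟩
  obtain ⟨hc, hxc⟩ := h.choose_spec
  have hL := chaconL_sub_chaconL_eq (k' := k + 1) (Nat.lt_of_succ_lt hk) hk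
    (Nat.lt_of_succ_lt hc) hc hx hxc (by ring)
  change max 0 (chaconT0 x) = _
  rw [chaconT0, dif_pos h, hL, max_eq_right]
  · ring
  · linarith [hxc.1, chaconL_nonneg h.choose.1 (h.choose.2 + 1)]

lemma coe_chaconTinv (hk : k + 1 < chaconH n) (hx : x ∈ level n (k + 1)) :
    (chaconTinv x : ℝ) = x + (chaconL n k - chaconL n (k + 1)) := by
  have h : ∃ p : ℕ × ℕ, p.2 + 1 < chaconH p.1 ∧ (x : ℝ) ∈ chaconLevel p.1 (p.2 + 1) :=
    ⟨(n, k), hk, hx⟩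
  obtain ⟨hc, hxc⟩ := h.choose_spec
  have hL := chaconL_sub_chaconL_eq (j' := h.choose.2) hk (Nat.lt_of_succ_lt hk) hc
    (Nat.lt_of_succ_lt hc) hx hxc (by ring)
  change max 0 (chaconT0inv x) = _
  rw [chaconT0inv, dif_pos h, hL, max_eq_right]
  · ring
  · linarith [hxc.1, chaconL_nonneg h.choose.1 h.choose.2]

lemma chaconT_mem_level (hk : k + 1 < chaconH n) (hx : x ∈ level n k) :
    chaconT x ∈ level n (k + 1) := by
  have hT := coe_chaconT hk hx
  constructor <;> linarith [hx.1, hx.2]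

lemma chaconTinv_mem_level (hk : k + 1 < chaconH n) (hx : x ∈ level n (k + 1)) :
    chaconTinv x ∈ level n k := by
  have hT := coe_chaconTinv hk hx
  constructor <;> linarith [hx.1, hx.2]

lemma chaconTinv_chaconT : LeftInverse chaconTinv chaconT := by
  intro x
  obtain ⟨n, k, hk, hx⟩ := (eventually_exists_mem_level x).exists
  have hk' : k + 1 < chaconH n := by lia
  ext
  rw [coe_chaconTinv hk' (chaconT_mem_level hk' hx), coe_chaconT hk' hx]
  ring

lemma preimage_chaconT_level (hk : k + 1 < chaconH n) :
    chaconT ⁻¹' level n (k + 1) = level n k :=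
  Subset.antisymm (fun x hx ↦ chaconTinv_chaconT x ▸ chaconTinv_mem_level hk hx)
    fun _ ↦ chaconT_mem_level hk

lemma iterate_chaconT_mem_level (hk : j + k < chaconH n) (hx : x ∈ level n k) :
    chaconT^[j] x ∈ level n (j + k) := by
  induction j with
  | zero => rwa [zero_add]
  | succ j ih =>
    rw [add_right_comm] at hk ⊢
    rw [iterate_succ_apply']
    exact chaconT_mem_level hk (ih (Nat.lt_of_succ_lt hk))

lemma iterate_chaconTinv_mem_level (hk : k + j < chaconH n) (hx : x ∈ level n (k + j)) :
    chaconTinv^[j] x ∈ level n k := by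
  induction j generalizing x with
  | zero => exact hx
  | succ j ih => exact ih (Nat.lt_of_succ_lt hk) (chaconTinv_mem_level hk hx)

lemma chaconTZ_mem_level {j : ℤ} (hk : k < chaconH n) (hm : m < chaconH n) (h : (m : ℤ) = k + j)
    (hx : x ∈ level n k) : chaconTZ j x ∈ level n m := by
  unfold chaconTZ
  split_ifs
  · obtain rfl : m = j.toNat + k := by lia
    exact iterate_chaconT_mem_level hm hx
  · obtain rfl : k = m + (-j).toNat := by lia
    exact iterate_chaconTinv_mem_level hk hx

lemma measurable_chaconT : Measurable chaconT := by
  refine measurable_of_isOpen fun U hU ↦ ?_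
  have hpre : chaconT ⁻¹' U =
      ⋃ (n) (k) (_ : k + 1 < chaconH n ∧ level n (k + 1) ⊆ U), level n k := by
    refine Subset.antisymm (fun x hx ↦ ?_) ?_
    · obtain ⟨n, hsub, k, hk, hxk⟩ := ((eventually_level_subset (hU.mem_nhds hx)).and
        (eventually_exists_mem_level x)).exists
      have hk' : k + 1 < chaconH n := by lia
      simp only [mem_iUnion]
      exact ⟨n, k, ⟨hk', hsub _ (chaconT_mem_level hk' hxk)⟩, hxk⟩
    · simp only [iUnion_subset_iff]
      exact fun n k ⟨hk, hU⟩ x hx ↦ hU (chaconT_mem_level hk hx)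
  rw [hpre]
  exact .iUnion fun n ↦ .iUnion fun k ↦ .iUnion fun _ ↦ measurableSet_level n k

/-! ### Invariant measures on `X` -/

/-- The levels of all towers: a countable π-system that generates the Borel sets of `X`. -/
def levels : Set (Set ChaconX) := {s | ∃ n, ∃ k < chaconH n, level n k = s}

lemma countable_levels : levels.Countable := by
  have : levels ⊆ range fun p : ℕ × ℕ ↦ level p.1 p.2 := fun _ ⟨n, k, _, h⟩ ↦ ⟨(n, k), h⟩
  exact (countable_range _).mono this

lemma isPiSystem_levels : IsPiSystem levels := by
  rintro _ ⟨n, k, hk, rfl⟩ _ ⟨m, j, hj, rfl⟩ ⟨x, hx, hx'⟩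
  rcases le_total n m with hnm | hmn
  · rw [inter_eq_right.2 (level_subset_level hnm hx hx')]
    exact ⟨m, j, hj, rfl⟩
  · rw [inter_eq_left.2 (level_subset_level hmn hx' hx)]
    exact ⟨n, k, hk, rfl⟩

lemma sUnion_levels : ⋃₀ levels = univ := by
  refine eq_univ_of_forall fun x ↦ ?_
  obtain ⟨n, k, hk, hx⟩ := (eventually_exists_mem_level x).exists
  exact ⟨_, ⟨n, k, lt_chaconH_of_lt_half hk, rfl⟩, hx⟩

lemma generateFrom_levels :
    MeasurableSpace.generateFrom levels = (inferInstance : MeasurableSpace ChaconX) := by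
  refine le_antisymm (MeasurableSpace.generateFrom_le ?_) ?_
  · rintro _ ⟨n, k, -, rfl⟩
    exact measurableSet_level n k
  · rw [BorelSpace.measurable_eq (α := ChaconX)]
    refine MeasurableSpace.generateFrom_le fun U (hU : IsOpen U) ↦ ?_
    have hcover : U = ⋃₀ {s ∈ levels | s ⊆ U} := by
      refine Subset.antisymm (fun x hx ↦ ?_) (sUnion_subset fun s hs ↦ hs.2)
      obtain ⟨n, hsub, k, hk, hxk⟩ := ((eventually_level_subset (hU.mem_nhds hx)).and
        (eventually_exists_mem_level x)).exists
      exact ⟨_, ⟨⟨n, k, lt_chaconH_of_lt_half hk, rfl⟩, hsub k hxk⟩, hxk⟩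
    rw [hcover]
    exact .sUnion (countable_levels.mono (sep_subset _ _))
      fun s hs ↦ MeasurableSpace.measurableSet_generateFrom hs.1

section Invariant

variable {ν : Measure ChaconX}

lemma measure_level_eq_bottom (hν : MeasurePreserving chaconT ν ν)
    (hk : k < chaconH n) : ν (level n k) = ν (level n 0) := by
  induction k with
  | zero => rfl
  | succ k ih =>
    rw [← ih (Nat.lt_of_succ_lt hk), ← preimage_chaconT_level hk,
      hν.measure_preimage (measurableSet_level n _).nullMeasurableSet]

lemma measure_level_eq_sum (hk : k < chaconH n) (ν : Measure ChaconX) :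
    ν (level n k) = ∑ c, ν (level (n + 1) (k + copyOffset n c)) := by
  have hunion : level n k = ⋃ c, level (n + 1) (k + copyOffset n c) := by
    ext x
    rw [mem_iUnion, mem_level_iff_exists_copy hk]
  have hdisj : Pairwise (Disjoint on fun c ↦ level (n + 1) (k + copyOffset n c)) := by
    refine fun c c' hne ↦ Set.disjoint_left.2 fun x hx hx' ↦ hne (Fin.ext ?_)
    rw [mem_level_iff_floor, levelRank_add_copyOffset hk] at hx hx'
    lia
  rw [hunion, measure_iUnion hdisj fun _ ↦ measurableSet_level _ _, tsum_fintype]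

lemma measure_level_eq (hν : MeasurePreserving chaconT ν ν) (hk : k < chaconH n) :
    ν (level n k) = ν (level 0 0) * (3 : ℝ≥0∞)⁻¹ ^ n := by
  induction n generalizing k with
  | zero => rw [measure_level_eq_bottom hν hk, pow_zero, mul_one]
  | succ n ih =>
    have hn := ih (chaconH_pos n)
    simp only [measure_level_eq_sum (chaconH_pos n), measure_level_eq_bottom hν
      (add_copyOffset_lt (chaconH_pos n) _), Finset.sum_const, Finset.card_univ, Fintype.card_fin,
      nsmul_eq_mul, Nat.cast_ofNat] at hn
    rw [measure_level_eq_bottom hν hk, pow_succ', mul_left_comm, ← hn,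
      ENNReal.inv_mul_cancel_left] <;> simp

theorem eq_smul_chaconMu_of_measurePreserving (hν : MeasurePreserving chaconT ν ν)
    (hfin : ν (level 0 0) ≠ ⊤) : ν = ν (level 0 0) • chaconMu := by
  refine Measure.ext_of_generateFrom_of_cover_subset generateFrom_levels.symm isPiSystem_levels
    Subset.rfl countable_levels sUnion_levels ?_ ?_
  · rintro _ ⟨n, k, hk, rfl⟩
    rw [measure_level_eq hν hk]
    exact ENNReal.mul_ne_top hfin (by simp)
  · rintro _ ⟨n, k, hk, rfl⟩
    rw [measure_level_eq hν hk, Measure.smul_apply, chaconMu_level, smul_eq_mul]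

end Invariant

/-! ### Boxes and diagonals -/

section Diagonal

variable {ι : Type} {κ κ' : ι → ℕ} {z : ι → ChaconX}

/-- The product of the levels `κ i` of tower `n`. An `n`-box is such a product with all
`κ i < hₙ / 2`. -/
def box (n : ℕ) (κ : ι → ℕ) : Set (ι → ChaconX) := {z | ∀ i, z i ∈ level n (κ i)}

lemma box_nonempty (n : ℕ) (κ : ι → ℕ) : (box n κ).Nonempty :=
  ⟨fun i ↦ (level_nonempty n (κ i)).some, fun i ↦ (level_nonempty n (κ i)).some_mem⟩

lemma box_index_unique (hκ : ∀ i, κ i < chaconH n) (hκ' : ∀ i, κ' i < chaconH n)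
    (hz : z ∈ box n κ) (hz' : z ∈ box n κ') : κ = κ' :=
  funext fun i ↦ level_index_unique (hκ i) (hκ' i) (hz i) (hz' i)

lemma mem_chaconCd_iff :
    z ∈ chaconCd ι n ↔ ∃ κ : ι → ℕ, (∀ i, κ i < chaconH n / 2) ∧ z ∈ box n κ :=
  Classical.skolem.trans <| exists_congr fun _ ↦ forall_and

lemma image_chaconTdZ_box_subset {j : ℤ} (hκ : ∀ i, κ i < chaconH n) (hκ' : ∀ i, κ' i < chaconH n)
    (h : ∀ i, (κ' i : ℤ) = κ i + j) : chaconTdZ ι j '' box n κ ⊆ box n κ' := by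
  rintro _ ⟨z, hz, rfl⟩ i
  exact chaconTZ_mem_level (hκ i) (hκ' i) (h i) (hz i)

lemma chaconBoxTau_box (hκ : ∀ i, κ i < chaconH n) (τ : ι → Fin 3) :
    chaconBoxTau ι n (box n κ) (fun i ↦ τ i + 1) =
      box (n + 1) fun i ↦ κ i + copyOffset n (τ i) := by
  ext z
  constructor
  · rintro ⟨hz, hτ⟩ i
    obtain ⟨c, hc⟩ := (mem_level_iff_exists_copy (hκ i)).1 (hz i)
    obtain rfl : c = τ i :=
      Fin.ext <| Nat.succ_injective <| (chaconTn_eq (hκ i) hc).symm.trans (hτ i)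
    exact hc
  · exact fun hz ↦ ⟨fun i ↦ (mem_level_iff_exists_copy (hκ i)).2 ⟨_, hz i⟩,
      fun i ↦ chaconTn_eq (hκ i) (hz i)⟩

/-- The union of the `n`-boxes obtained from `box n κ` by moving all coordinates up by the same
number of levels. If some `κ i` vanishes, this is the `n`-diagonal with lowest box `box n κ`. -/
def boxDiagonal (n : ℕ) (κ : ι → ℕ) : Set (ι → ChaconX) :=
  {z | ∃ j, (∀ i, κ i + j < chaconH n / 2) ∧ z ∈ box n fun i ↦ κ i + j}

lemma mem_boxDiagonal_iff_of_mem_box (hκ' : ∀ i, κ' i < chaconH n / 2) (hz : z ∈ box n κ') :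
    z ∈ boxDiagonal n κ ↔ ∃ j, ∀ i, κ' i = κ i + j := by
  constructor
  · rintro ⟨j, hj, hzj⟩
    exact ⟨j, congrFun (box_index_unique (fun i ↦ lt_chaconH_of_lt_half (hκ' i))
      (fun i ↦ lt_chaconH_of_lt_half (hj i)) hz hzj)⟩
  · rintro ⟨j, hj⟩
    obtain rfl : κ' = fun i ↦ κ i + j := funext hj
    exact ⟨j, hκ', hz⟩

lemma eq_of_forall_add_eq_add {j j' : ℕ} (hκ : ∃ i, κ i = 0) (hκ' : ∃ i, κ' i = 0)
    (h : ∀ i, κ i + j = κ' i + j') : κ = κ' := by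
  obtain ⟨i, hi⟩ := hκ
  obtain ⟨i', hi'⟩ := hκ'
  have hjj' : j = j' := by
    have := h i
    have := h i'
    lia
  exact funext fun a ↦ Nat.add_right_cancel (hjj' ▸ h a)

lemma image_chaconTdZ_zero (B : Set (ι → ChaconX)) : chaconTdZ ι 0 '' B = B := by
  have hid : chaconTdZ ι 0 = id := by
    ext z i
    simp [chaconTdZ, chaconTZ]
  rw [hid, image_id]

lemma image_chaconTdZ_box_eq {ℓ : ℕ} (hκ : ∀ i, κ i < chaconH n / 2)
    (hbox : ∀ j ≤ ℓ, IsNBox ι n (chaconTdZ ι (j : ℕ) '' box n κ)) (hj : j ≤ ℓ) :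
    (∀ i, κ i + j < chaconH n / 2) ∧ chaconTdZ ι j '' box n κ = box n fun i ↦ κ i + j := by
  induction j with
  | zero => exact ⟨hκ, image_chaconTdZ_zero _⟩
  | succ j ih =>
    have hlt : ∀ i, κ i + (j + 1) < chaconH n := fun i ↦ by
      have := (ih (Nat.le_of_succ_le hj)).1 i
      lia
    obtain ⟨m, hm, himage⟩ := hbox (j + 1) hj
    have hsub : chaconTdZ ι (j + 1 : ℕ) '' box n κ ⊆ box n fun i ↦ κ i + (j + 1) :=
      image_chaconTdZ_box_subset (fun i ↦ lt_chaconH_of_lt_half (hκ i)) hlt (by simp)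
    obtain ⟨z, hz⟩ := (box_nonempty n κ).image (chaconTdZ ι (j + 1 : ℕ))
    obtain rfl : m = fun i ↦ κ i + (j + 1) :=
      box_index_unique (fun i ↦ lt_chaconH_of_lt_half (hm i)) hlt (himage.subset hz) (hsub hz)
    exact ⟨hm, himage⟩

lemma exists_eq_boxDiagonal_of_isNDiagonal {D : Set (ι → ChaconX)} (hD : IsNDiagonal ι n D) :
    ∃ κ : ι → ℕ, (∃ i, κ i = 0) ∧ (∀ i, κ i < chaconH n / 2) ∧ D = boxDiagonal n κ := by
  obtain ⟨B, ℓ, hbox, hbot, htop, rfl⟩ := hD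
  obtain ⟨κ, hκ, rfl⟩ : IsNBox ι n B := image_chaconTdZ_zero B ▸ hbox 0 ℓ.zero_le
  have himage := fun j ↦ image_chaconTdZ_box_eq (j := j) hκ hbox
  have hlt := fun i ↦ lt_chaconH_of_lt_half (hκ i)
  have hzero : ∃ i, κ i = 0 := by
    by_contra! hne
    have hpred : ∀ i, κ i - 1 < chaconH n / 2 := fun i ↦ (Nat.sub_le _ _).trans_lt (hκ i)
    refine hbot fun z hz ↦ mem_chaconCd_iff.2 ⟨_, hpred, ?_⟩
    exact image_chaconTdZ_box_subset hlt (fun i ↦ lt_chaconH_of_lt_half (hpred i))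
      (fun i ↦ by have := hne i; lia) hz
  have hmax : ∃ i, chaconH n / 2 ≤ κ i + (ℓ + 1) := by
    by_contra! hsucc
    refine htop fun z hz ↦ mem_chaconCd_iff.2 ⟨_, hsucc, ?_⟩
    exact image_chaconTdZ_box_subset hlt (fun i ↦ lt_chaconH_of_lt_half (hsucc i))
      (by simp) hz
  refine ⟨κ, hzero, hκ, Subset.antisymm (iUnion₂_subset fun j hj ↦ ?_) ?_⟩
  · obtain ⟨hj', heq⟩ := himage j (Finset.mem_range_succ_iff.1 hj)
    exact fun z hz ↦ ⟨j, hj', heq ▸ hz⟩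
  · rintro z ⟨j, hj', hz⟩
    obtain ⟨i, hi⟩ := hmax
    have hj : j ≤ ℓ := by
      have := hj' i
      lia
    exact mem_iUnion₂.2 ⟨j, Finset.mem_range_succ_iff.2 hj, (himage j hj).2 ▸ hz⟩

lemma centralTransition_boxDiagonal_iff (hκ : ∀ i, κ i < chaconH n / 2) (hzero : ∃ i, κ i = 0)
    (hzero' : ∃ i, κ' i = 0) :
    CentralTransition ι n (boxDiagonal n κ) (boxDiagonal (n + 1) κ') ↔ κ = κ' := by
  have hcentral : ∀ {m : ι → ℕ}, (∀ i, m i < chaconH n / 2) →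
      chaconBoxTau ι n (box n m) (fun _ ↦ 1) = box (n + 1) m := fun hm ↦
    chaconBoxTau_box (fun i ↦ lt_chaconH_of_lt_half (hm i)) fun _ ↦ 0
  constructor
  · intro h
    have hsub : box n κ ⊆ boxDiagonal n κ := fun z hz ↦ ⟨0, hκ, hz⟩
    obtain ⟨z, hz⟩ := box_nonempty (n + 1) κ
    obtain ⟨j, hj⟩ := (mem_boxDiagonal_iff_of_mem_box (fun i ↦ lt_half_chaconH_succ (hκ i)) hz).1
      (h _ ⟨κ, hκ, rfl⟩ hsub (hcentral hκ ▸ hz))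
    exact eq_of_forall_add_eq_add (j := 0) hzero hzero' hj
  · rintro rfl _ ⟨m, hm, rfl⟩ hsub
    obtain ⟨z, hz⟩ := box_nonempty n m
    obtain ⟨j, hj⟩ := (mem_boxDiagonal_iff_of_mem_box hm hz).1 (hsub hz)
    intro w hw
    exact (mem_boxDiagonal_iff_of_mem_box (fun i ↦ lt_half_chaconH_succ (hm i))
      (hcentral hm ▸ hw)).2 ⟨j, hj⟩

/-! ### Graph joinings -/

variable {σ : Measure (ι → ChaconX)}

lemma box_eq_univ_pi (n : ℕ) (κ : ι → ℕ) : box n κ = univ.pi fun i ↦ level n (κ i) := by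
  ext
  simp [box]

lemma measurableSet_box [Countable ι] (n : ℕ) (κ : ι → ℕ) : MeasurableSet (box n κ) :=
  box_eq_univ_pi n κ ▸ .univ_pi fun i ↦ measurableSet_level n (κ i)

lemma isBounded_box (n : ℕ) (κ : ι → ℕ) : Bornology.IsBounded (box n κ) :=
  box_eq_univ_pi n κ ▸ .pi fun i ↦ isBounded_level n (κ i)

lemma exists_eventually_measure_box_pos [Fintype ι] (h : IsGraphJoining ι σ) :
    ∃ m : ι → ℕ, ∀ᶠ n in atTop, (∀ i, m i < chaconH n / 2) ∧ 0 < σ (box n m) := by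
  obtain ⟨α, k, hα, -, hσ⟩ := h
  obtain ⟨K, hK⟩ : ∃ K : ℕ, ∀ i, 0 ≤ K + k i :=
    ⟨∑ i, (k i).natAbs, fun i ↦ by
      have := Finset.single_le_sum (f := fun i ↦ (k i).natAbs) (fun _ _ ↦ Nat.zero_le _)
        (Finset.mem_univ i)
      lia⟩
  refine ⟨fun i ↦ (K + k i).toNat, ?_⟩
  filter_upwards [eventually_lt_half_chaconH K,
    eventually_all.2 fun i ↦ eventually_lt_half_chaconH (K + k i).toNat] with n hKn hn
  have hsub : level n K ⊆ ⋂ i, chaconTZ (k i) ⁻¹' level n (K + k i).toNat :=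
    subset_iInter fun i _ ↦ chaconTZ_mem_level (lt_chaconH_of_lt_half hKn)
      (lt_chaconH_of_lt_half (hn i)) (Int.toNat_of_nonneg (hK i))
  have hpos : 0 < chaconMu (level n K) := by
    rw [chaconMu_level]
    exact ENNReal.pow_pos (by simp) n
  refine ⟨hn, ?_⟩
  rw [box_eq_univ_pi, hσ _ fun i ↦ measurableSet_level n _]
  exact ENNReal.mul_pos hα.ne' (hpos.trans_le (measure_mono hsub)).ne'

/-- The parametrization `x ↦ (T^{κ i} x)ᵢ` of the graph of the powers `T^{κ i}`. -/
noncomputable def graphMap (κ : ι → ℕ) (x : ChaconX) : ι → ChaconX := fun i ↦ chaconT^[κ i] x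

lemma measurable_graphMap (κ : ι → ℕ) : Measurable (graphMap κ) :=
  measurable_pi_lambda _ fun i ↦ measurable_chaconT.iterate (κ i)

lemma graphMap_mem_box {x : ChaconX} (h : ∀ i, κ i + j < chaconH n) (hx : x ∈ level n j) :
    graphMap κ x ∈ box n fun i ↦ κ i + j :=
  fun i ↦ iterate_chaconT_mem_level (h i) hx

lemma isGraphJoining_map_graphMap [Fintype ι] {α : ℝ≥0∞} (hα : α ≠ 0) (hα' : α ≠ ⊤)
    (κ : ι → ℕ) : IsGraphJoining ι ((α • chaconMu).map (graphMap κ)) := by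
  refine ⟨α, fun i ↦ κ i, pos_iff_ne_zero.2 hα, hα', fun A hA ↦ ?_⟩
  rw [Measure.map_apply (measurable_graphMap κ) (.univ_pi hA), Measure.smul_apply, smul_eq_mul]
  congr 2
  ext x
  simp [graphMap, chaconTZ]

lemma ae_eq_graphMap [Finite ι] {i₀ : ι} (hi₀ : κ i₀ = 0)
    (h : ∀ᶠ n in atTop, σ (chaconCd ι n \ boxDiagonal n κ) = 0) :
    ∀ᵐ z ∂σ, z = graphMap κ (z i₀) := by
  obtain ⟨N, hN⟩ := eventually_atTop.1 h
  have hae : ∀ᵐ z ∂σ, ∀ n ≥ N, z ∉ chaconCd ι n \ boxDiagonal n κ :=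
    ae_all_iff.2 fun n ↦ ae_all_iff.2 fun hn ↦ measure_eq_zero_iff_ae_notMem.1 (hN n hn)
  filter_upwards [hae] with z hz
  refine funext fun i ↦ eq_of_eventually_mem_same_level ?_
  filter_upwards [eventually_ge_atTop N,
    eventually_all.2 fun i ↦ eventually_exists_mem_level (z i)] with n hn hzn
  obtain ⟨j, hj, hzj⟩ := not_not.1 fun hzD ↦ hz n hn ⟨hzn, hzD⟩
  have hzi₀ : z i₀ ∈ level n j := by simpa [hi₀] using hzj i₀
  exact ⟨κ i + j, hzj i, graphMap_mem_box (fun i ↦ lt_chaconH_of_lt_half (hj i)) hzi₀ i⟩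

lemma eq_map_graphMap_map_eval {i₀ : ι} (h : ∀ᵐ z ∂σ, z = graphMap κ (z i₀)) :
    σ = (σ.map (eval i₀)).map (graphMap κ) := by
  rw [Measure.map_map (measurable_graphMap κ) (measurable_pi_apply i₀)]
  conv_lhs => rw [← Measure.map_id (μ := σ)]
  exact Measure.map_congr h

lemma measurePreserving_map_eval (hinv : σ.map (chaconTd ι) = σ) (i : ι) :
    MeasurePreserving chaconT (σ.map (eval i)) (σ.map (eval i)) := by
  have hT : MeasurePreserving (chaconTd ι) σ σ :=
    ⟨measurable_pi_lambda _ fun i ↦ measurable_chaconT.comp (measurable_pi_apply i), hinv⟩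
  exact ((measurable_pi_apply i).measurePreserving σ).of_semiconj hT (fun _ ↦ rfl)
    measurable_chaconT

lemma map_eval_level_ne_top [Fintype ι] {i₀ : ι} (hbf : BoundedlyFinite σ)
    (hinv : σ.map (chaconTd ι) = σ) (h : ∀ᵐ z ∂σ, z = graphMap κ (z i₀)) :
    σ.map (eval i₀) (level 0 0) ≠ ⊤ := by
  obtain ⟨n, hn⟩ := (eventually_all.2 fun i ↦ eventually_lt_half_chaconH (κ i)).exists
  have hle : σ.map (eval i₀) (level n 0) ≤ σ (box n κ) := by
    rw [Measure.map_apply (measurable_pi_apply i₀) (measurableSet_level n 0)]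
    refine measure_mono_ae (h.mono fun z hz (hzn : z i₀ ∈ level n 0) ↦ ?_)
    exact (hz ▸ graphMap_mem_box (fun i ↦ lt_chaconH_of_lt_half (hn i)) hzn : z ∈ box n κ)
  have hlt := hle.trans_lt (hbf _ (measurableSet_box n κ) (isBounded_box n κ))
  rw [measure_level_eq (measurePreserving_map_eval hinv i₀) (chaconH_pos n)] at hlt
  exact (ENNReal.lt_top_of_mul_ne_top_left hlt.ne (by simp)).ne

lemma isGraphJoining_of_eventually_boxDiagonal [Fintype ι] (hbf : BoundedlyFinite σ)
    (hinv : σ.map (chaconTd ι) = σ) (hσ : σ ≠ 0) (hzero : ∃ i, κ i = 0)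
    (h : ∀ᶠ n in atTop, σ (chaconCd ι n \ boxDiagonal n κ) = 0) : IsGraphJoining ι σ := by
  obtain ⟨i₀, hi₀⟩ := hzero
  have hgraph := ae_eq_graphMap hi₀ h
  obtain ⟨α, hα, hσα⟩ : ∃ α : ℝ≥0∞, α ≠ ⊤ ∧ σ = (α • chaconMu).map (graphMap κ) := by
    have hfin := map_eval_level_ne_top hbf hinv hgraph
    refine ⟨_, hfin, ?_⟩
    rw [← eq_smul_chaconMu_of_measurePreserving (measurePreserving_map_eval hinv i₀) hfin]
    exact eq_map_graphMap_map_eval hgraph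
  have hα₀ : α ≠ 0 := by
    rintro rfl
    exact hσ (by simpa using hσα)
  exact hσα ▸ isGraphJoining_map_graphMap hα₀ hα κ

lemma exists_add_eq_of_measure_box_pos {m : ι → ℕ} (hm : ∀ i, m i < chaconH n / 2)
    (hpos : 0 < σ (box n m)) (h : σ (chaconCd ι n \ boxDiagonal n κ) = 0) :
    ∃ j, ∀ i, m i = κ i + j := by
  obtain ⟨z, hz, hzD⟩ : (box n m ∩ boxDiagonal n κ).Nonempty := by
    by_contra hempty
    have hsub : box n m ⊆ chaconCd ι n \ boxDiagonal n κ := fun z hz ↦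
      ⟨mem_chaconCd_iff.2 ⟨m, hm, hz⟩, fun hzD ↦ hempty ⟨z, hz, hzD⟩⟩
    exact hpos.ne' (measure_mono_null hsub h)
  exact (mem_boxDiagonal_iff_of_mem_box hm hz).1 hzD

lemma isGraphJoining_iff_eventually_eq_succ [Fintype ι] {κ : ℕ → ι → ℕ} (hbf : BoundedlyFinite σ)
    (hinv : σ.map (chaconTd ι) = σ) (hσ : σ ≠ 0)
    (hκ : ∀ᶠ n in atTop, (∃ i, κ n i = 0) ∧ σ (chaconCd ι n \ boxDiagonal n (κ n)) = 0) :
    IsGraphJoining ι σ ↔ ∀ᶠ n in atTop, κ n = κ (n + 1) := by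
  constructor
  · intro h
    obtain ⟨m, hm⟩ := exists_eventually_measure_box_pos h
    have hbase : ∀ᶠ n in atTop, (∃ i, κ n i = 0) ∧ ∃ j, ∀ i, m i = κ n i + j := by
      filter_upwards [hκ, hm] with n hn hmn
      exact ⟨hn.1, exists_add_eq_of_measure_box_pos hmn.1 hmn.2 hn.2⟩
    filter_upwards [hbase, (tendsto_add_atTop_nat 1).eventually hbase]
      with n ⟨hzero, j, hj⟩ ⟨hzero', j', hj'⟩
    exact eq_of_forall_add_eq_add hzero hzero' fun i ↦ (hj i).symm.trans (hj' i)
  · intro h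
    have hconst : EventuallyConst κ atTop :=
      eventuallyConst_atTop_nat.2 (eventually_atTop.1 (h.mono fun _ ↦ Eq.symm))
    obtain ⟨N, hN⟩ := eventuallyConst_atTop.1 hconst
    have hκN : ∀ᶠ n in atTop, (∃ i, κ N i = 0) ∧ σ (chaconCd ι n \ boxDiagonal n (κ N)) = 0 := by
      filter_upwards [hκ, eventually_ge_atTop N] with n hn hNn
      rwa [← hN n hNn]
    obtain ⟨_, hzero, -⟩ := hκN.exists
    exact isGraphJoining_of_eventually_boxDiagonal hbf hinv hσ hzero (hκN.mono fun _ ↦ And.right)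

end Diagonal

end Chacon

theorem chacon_graph_iff_central_general {ι : Type} [Fintype ι] {σ : Measure (ι → ChaconX)}
    (hbf : BoundedlyFinite σ) (hinv : σ.map (chaconTd ι) = σ) (hσ : σ ≠ 0)
    {D : ℕ → Set (ι → ChaconX)}
    (hD : ∀ᶠ n in Filter.atTop, IsNDiagonal ι n (D n) ∧ σ (chaconCd ι n \ D n) = 0) :
    IsGraphJoining ι σ ↔ ∀ᶠ n in Filter.atTop, CentralTransition ι n (D n) (D (n + 1)) := by
  have hbase : ∀ᶠ n in Filter.atTop, ∃ κ : ι → ℕ, (∃ i, κ i = 0) ∧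
      (∀ i, κ i < chaconH n / 2) ∧ D n = Chacon.boxDiagonal n κ :=
    hD.mono fun n hn ↦ Chacon.exists_eq_boxDiagonal_of_isNDiagonal hn.1
  obtain ⟨κ, hκ⟩ := hbase.choice
  rw [Chacon.isGraphJoining_iff_eventually_eq_succ hbf hinv hσ (κ := κ)]
  · refine Filter.eventually_congr ?_
    filter_upwards [hκ, (Filter.tendsto_add_atTop_nat 1).eventually hκ] with n hn hn'
    rw [hn.2.2, hn'.2.2, Chacon.centralTransition_boxDiagonal_iff hn.2.1 hn.1 hn'.1]
  · filter_upwards [hκ, hD] with n hn hDn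
    exact ⟨hn.1, hn.2.2 ▸ hDn.2⟩

/-- **Proposition (identification of graph joinings).**  A diagonal measure `σ` on `X^d`
(with charged diagonals `(Dₙ)_{n ≥ n₀}`) is a graph joining arising from powers of `T`
if and only if there exists `n₁ ≥ n₀` such that for all `n ≥ n₁` the transition from
`Dₙ(σ)` to `D_{n+1}(σ)` is the central one, `D_{n+1}(σ) = Dₙ(σ)(1,…,1)`. -/
theorem chacon_graph_iff_central (d n₀ : ℕ) (σ : Measure (Fin d → ChaconX))
    (hbf : BoundedlyFinite σ) (hinv : σ.map (chaconTd (Fin d)) = σ)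
    (D : ℕ → Set (Fin d → ChaconX))
    (hD : ∀ n, n₀ ≤ n → IsNDiagonal (Fin d) n (D n) ∧ σ (chaconCd (Fin d) n \ D n) = 0)
    (hpos : ∀ n, n₀ ≤ n → 0 < σ (chaconCd (Fin d) n)) :
    IsGraphJoining (Fin d) σ ↔
      ∃ n₁ : ℕ, n₀ ≤ n₁ ∧ ∀ n, n₁ ≤ n →
        CentralTransition (Fin d) n (D n) (D (n + 1)) := by
  have hσ : σ ≠ 0 := by
    rintro rfl
    exact (hpos n₀ le_rfl).ne rfl
  exact (chacon_graph_iff_central_general hbf hinv hσ (Filter.eventually_atTop.2 ⟨n₀, hD⟩)).trans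
    (Filter.atTop_basis' n₀).eventually_iff
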